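/- arXiv:2402.17849 — 2 statements merged into one kernel-verified Lean document; each statement's English description precedes it below -/
import Mathlib

section
/- For every integer n ≥ 1, the sum, over all Dyck paths of length 2n and over all peaks of each path, of the heights of the peaks equals 4^(n−1). -/
/-- The step associated to a letter: `true` is an up step `+1`, `false` a down step `-1`. -/
def stepVal (b : Bool) : ℤ := if b then 1 else -1

/-- Partial sum `S_i`: the sum of the first `i` steps of the word `w`. -/
def psum {L : ℕ} (w : Fin L → Bool) (i : ℕ) : ℤ :=
  ∑ j : Fin L, if (j : ℕ) < i then stepVal (w j) else 0

/-- A Dyck bridge: a `±1` word whose total sum is `0`. -/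
def IsBridge {L : ℕ} (w : Fin L → Bool) : Prop := psum w L = 0

/-- A Dyck path: a bridge all of whose partial sums are nonnegative. -/
def IsDyck {L : ℕ} (w : Fin L → Bool) : Prop :=
  IsBridge w ∧ ∀ i : ℕ, 0 ≤ psum w i

/-- A peak at (0-based) position `i`: step `i` is up and step `i+1` is down. -/
def IsPeak {L : ℕ} (w : Fin L → Bool) (i : ℕ) : Prop :=
  ∃ j k : Fin L, (j : ℕ) = i ∧ (k : ℕ) = i + 1 ∧ w j = true ∧ w k = false

/-- The height of the peak at (0-based) position `i`, i.e. the altitude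
reached by its up step. -/
def peakHeight {L : ℕ} (w : Fin L → Bool) (i : ℕ) : ℤ := psum w (i + 1)

/-- A crossing of the x-axis at (1-based) index `i`: `0 < i < L`, `S_i = 0`,
and the steps `w_i`, `w_{i+1}` (1-based) are equal. -/
def IsCrossing {L : ℕ} (w : Fin L → Bool) (i : ℕ) : Prop :=
  0 < i ∧ i < L ∧ psum w i = 0 ∧
    ∃ j k : Fin L, (j : ℕ) + 1 = i ∧ (k : ℕ) = i ∧ w j = w k

/-!
For a starting height `h`, let `D m h` count the words of length `m` that descend from `h` to `0`
without going below `0`, and let `E m h` be the sum of all their peak heights. Removing the first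
step gives `D (m + 1) h = D m (h + 1) + D m (h - 1)` and
`E (m + 2) h = E (m + 1) (h + 1) + E (m + 1) (h - 1) + (h + 1) * D m h`, where the last term comes
from the paths that start with a peak. By induction on `m`,
`E (m + 3) h - 4 * E (m + 1) h = (h + 2).choose 2 * D m (h - 1) - (h + 1).choose 2 * D m (h + 1)`,
and the right-hand side vanishes at `h = 0`: two more steps multiply `E · 0` by `4`.
-/

section Cons

variable {L : ℕ}

lemma psum_zero (w : Fin L → Bool) : psum w 0 = 0 := by
  simp [psum]

lemma psum_cons_succ (b : Bool) (w : Fin L → Bool) (i : ℕ) :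
    psum (Fin.cons b w : Fin (L + 1) → Bool) (i + 1) = stepVal b + psum w i := by
  simp [psum, Fin.sum_univ_succ]

lemma isPeak_iff {w : Fin L → Bool} {i : ℕ} :
    IsPeak w i ↔ ∃ hi : i + 1 < L, w ⟨i, by lia⟩ = true ∧ w ⟨i + 1, hi⟩ = false := by
  constructor
  · rintro ⟨j, k, rfl, hk, hup, hdown⟩
    exact ⟨hk ▸ k.isLt, hup, (Fin.ext hk : k = ⟨j + 1, _⟩) ▸ hdown⟩
  · rintro ⟨hi, hup, hdown⟩
    exact ⟨_, _, rfl, rfl, hup, hdown⟩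

lemma isPeak_cons_succ {b : Bool} {w : Fin L → Bool} {i : ℕ} :
    IsPeak (Fin.cons b w : Fin (L + 1) → Bool) (i + 1) ↔ IsPeak w i := by
  rw [isPeak_iff, isPeak_iff]
  exact exists_prop_congr (fun _ => Iff.rfl) Nat.succ_lt_succ_iff

lemma not_isPeak_cons_false_zero (w : Fin L → Bool) :
    ¬ IsPeak (Fin.cons false w : Fin (L + 1) → Bool) 0 := by
  rw [isPeak_iff]
  rintro ⟨_, hup, _⟩
  exact Bool.false_ne_true hup

lemma isPeak_cons_true_cons_zero {b : Bool} {w : Fin L → Bool} :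
    IsPeak (Fin.cons true (Fin.cons b w : Fin (L + 1) → Bool) : Fin (L + 2) → Bool) 0 ↔
      b = false := by
  rw [isPeak_iff]
  exact ⟨fun ⟨_, _, hdown⟩ => hdown, fun hb => ⟨Nat.lt_add_left L one_lt_two, rfl, hb⟩⟩

end Cons

section StartingHeight

open Finset

variable {L : ℕ}

/-- The word `w`, read from height `h`, stays at height `≥ 0` and ends at height `0`; these are the
final segments of Dyck paths, and the Dyck paths themselves for `h = 0`. Heights are integers, so
that stepping down from height `0` gives a starting height with no path at all. -/
def IsDyckFrom (h : ℤ) (w : Fin L → Bool) : Prop :=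
  h + psum w L = 0 ∧ ∀ i : ℕ, 0 ≤ h + psum w i

lemma IsDyckFrom.nonneg {h : ℤ} {w : Fin L → Bool} (hw : IsDyckFrom h w) : 0 ≤ h := by
  simpa only [psum_zero, add_zero] using hw.2 0

lemma isDyckFrom_cons {h : ℤ} {b : Bool} {w : Fin L → Bool} :
    IsDyckFrom h (Fin.cons b w : Fin (L + 1) → Bool) ↔ 0 ≤ h ∧ IsDyckFrom (h + stepVal b) w := by
  simp only [IsDyckFrom, ← Nat.and_forall_add_one (p := fun i => 0 ≤ h + psum _ i),
    psum_cons_succ, psum_zero, add_zero, add_assoc]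
  exact and_left_comm

lemma isDyckFrom_of_length_zero {h : ℤ} {w : Fin 0 → Bool} : IsDyckFrom h w ↔ h = 0 := by
  simpa [IsDyckFrom, psum] using ge_of_eq

open scoped Classical in
/-- The set of paths of length `L` from height `h` to height `0`, staying at height `≥ 0`. -/
noncomputable def dyckFrom (L : ℕ) (h : ℤ) : Finset (Fin L → Bool) := {w | IsDyckFrom h w}

lemma mem_dyckFrom {h : ℤ} {w : Fin L → Bool} : w ∈ dyckFrom L h ↔ IsDyckFrom h w := by
  simp [dyckFrom]

open scoped Classical in
lemma dyckFrom_zero (L : ℕ) : dyckFrom L 0 = ({w | IsDyck w} : Finset (Fin L → Bool)) := by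
  ext w
  rw [mem_dyckFrom, mem_filter_univ]
  simp only [IsDyckFrom, IsDyck, IsBridge, zero_add]

lemma dyckFrom_of_neg (L : ℕ) {h : ℤ} (hh : h < 0) : dyckFrom L h = ∅ :=
  eq_empty_of_forall_notMem fun _ hw => hh.not_ge (mem_dyckFrom.1 hw).nonneg

lemma card_dyckFrom_of_neg (L : ℕ) {h : ℤ} (hh : h < 0) : #(dyckFrom L h) = 0 := by
  rw [dyckFrom_of_neg L hh, card_empty]

lemma card_dyckFrom_length_zero (h : ℤ) : #(dyckFrom 0 h) = if h = 0 then 1 else 0 := by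
  simp [dyckFrom, isDyckFrom_of_length_zero, filter_const, apply_ite card]

lemma sum_dyckFrom_succ {M : Type*} [AddCommMonoid M] {h : ℤ} (hh : 0 ≤ h)
    (f : (Fin (L + 1) → Bool) → M) :
    ∑ w ∈ dyckFrom (L + 1) h, f w =
      ∑ w ∈ dyckFrom L (h + 1), f (Fin.cons true w) +
        ∑ w ∈ dyckFrom L (h - 1), f (Fin.cons false w) := by
  classical
  simp only [dyckFrom, sum_filter]
  rw [← (Fin.consEquiv fun _ : Fin (L + 1) => Bool).sum_comp, Fintype.sum_prod_type,
    Fintype.sum_bool]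
  simp [Fin.consEquiv, isDyckFrom_cons, hh, stepVal, sub_eq_add_neg]

lemma card_dyckFrom_succ (L : ℕ) {h : ℤ} (hh : 0 ≤ h) :
    #(dyckFrom (L + 1) h) = #(dyckFrom L (h + 1)) + #(dyckFrom L (h - 1)) := by
  simp only [card_eq_sum_ones, sum_dyckFrom_succ hh]

-- The factor `h` makes the recurrence at height `h - 1` valid for `h = 0` as well.
lemma mul_card_dyckFrom_succ_sub_one (L : ℕ) (h : ℤ) :
    h * #(dyckFrom (L + 1) (h - 1)) =
      h * (#(dyckFrom L h) + #(dyckFrom L (h - 1 - 1)) : ℤ) := by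
  rcases lt_trichotomy h 0 with hneg | rfl | hpos
  · simp [card_dyckFrom_of_neg, hneg, (by lia : h - 1 < 0), (by lia : h - 1 - 1 < 0)]
  · simp
  · rw [card_dyckFrom_succ L (by lia), sub_add_cancel, Nat.cast_add]

open scoped Classical in
/-- The sum of the heights of the peaks of the word `w`, read from height `h`. -/
noncomputable def peakHeightSum (h : ℤ) (w : Fin L → Bool) : ℤ :=
  ∑ i ∈ range L, if IsPeak w i then h + peakHeight w i else 0

lemma peakHeightSum_of_length_one (h : ℤ) (w : Fin 1 → Bool) : peakHeightSum h w = 0 := by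
  simp [peakHeightSum, isPeak_iff]

open scoped Classical in
lemma peakHeightSum_cons (h : ℤ) (b : Bool) (w : Fin L → Bool) :
    peakHeightSum h (Fin.cons b w : Fin (L + 1) → Bool) =
      peakHeightSum (h + stepVal b) w +
        if IsPeak (Fin.cons b w : Fin (L + 1) → Bool) 0 then h + stepVal b else 0 := by
  simp only [peakHeightSum, peakHeight, sum_range_succ', isPeak_cons_succ, psum_cons_succ,
    psum_zero, add_zero, add_assoc]

lemma peakHeightSum_cons_false (h : ℤ) (w : Fin L → Bool) :
    peakHeightSum h (Fin.cons false w : Fin (L + 1) → Bool) = peakHeightSum (h - 1) w := by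
  simp [peakHeightSum_cons, not_isPeak_cons_false_zero, stepVal, sub_eq_add_neg]

lemma peakHeightSum_cons_true_cons_true (h : ℤ) (w : Fin L → Bool) :
    peakHeightSum h (Fin.cons true (Fin.cons true w : Fin (L + 1) → Bool) : Fin (L + 2) → Bool) =
      peakHeightSum (h + 1) (Fin.cons true w : Fin (L + 1) → Bool) := by
  rw [peakHeightSum_cons]
  simp [isPeak_cons_true_cons_zero, stepVal]

lemma peakHeightSum_cons_true_cons_false (h : ℤ) (w : Fin L → Bool) :
    peakHeightSum h (Fin.cons true (Fin.cons false w : Fin (L + 1) → Bool) : Fin (L + 2) → Bool) =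
      peakHeightSum (h + 1) (Fin.cons false w : Fin (L + 1) → Bool) + (h + 1) := by
  rw [peakHeightSum_cons]
  simp [isPeak_cons_true_cons_zero, stepVal]

/-- The sum of the heights of all peaks of all paths in `dyckFrom L h`. -/
noncomputable def totalPeakHeight (L : ℕ) (h : ℤ) : ℤ := ∑ w ∈ dyckFrom L h, peakHeightSum h w

lemma totalPeakHeight_of_neg (L : ℕ) {h : ℤ} (hh : h < 0) : totalPeakHeight L h = 0 := by
  rw [totalPeakHeight, dyckFrom_of_neg L hh, sum_empty]

lemma totalPeakHeight_one (h : ℤ) : totalPeakHeight 1 h = 0 :=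
  sum_eq_zero fun w _ => peakHeightSum_of_length_one h w

lemma totalPeakHeight_add_two (L : ℕ) {h : ℤ} (hh : 0 ≤ h) :
    totalPeakHeight (L + 2) h =
      totalPeakHeight (L + 1) (h + 1) + totalPeakHeight (L + 1) (h - 1) +
        (h + 1) * #(dyckFrom L h) := by
  have up_first : ∑ w ∈ dyckFrom (L + 1) (h + 1),
      peakHeightSum h (Fin.cons true w : Fin (L + 2) → Bool) =
        totalPeakHeight (L + 1) (h + 1) + (h + 1) * #(dyckFrom L h) := by
    simp only [totalPeakHeight, sum_dyckFrom_succ (by lia : 0 ≤ h + 1),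
      peakHeightSum_cons_true_cons_true, peakHeightSum_cons_true_cons_false, sum_add_distrib,
      sum_const, nsmul_eq_mul, add_sub_cancel_right]
    ring
  have down_first : ∑ w ∈ dyckFrom (L + 1) (h - 1),
      peakHeightSum h (Fin.cons false w : Fin (L + 2) → Bool) =
        totalPeakHeight (L + 1) (h - 1) := by
    simp only [totalPeakHeight, peakHeightSum_cons_false]
  rw [totalPeakHeight, sum_dyckFrom_succ hh, up_first, down_first]
  ring

lemma totalPeakHeight_two (h : ℤ) : totalPeakHeight 2 h = if h = 0 then 1 else 0 := by
  rcases lt_or_ge h 0 with hneg | hh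
  · rw [totalPeakHeight_of_neg 2 hneg, if_neg hneg.ne]
  · rw [totalPeakHeight_add_two 0 hh, totalPeakHeight_one, totalPeakHeight_one,
      card_dyckFrom_length_zero]
    split_ifs with h0 <;> simp [h0]

lemma totalPeakHeight_three (h : ℤ) : totalPeakHeight 3 h = if h = 1 then 3 else 0 := by
  rcases lt_or_ge h 0 with hneg | hh
  · rw [totalPeakHeight_of_neg 3 hneg, if_neg (by lia)]
  · rw [totalPeakHeight_add_two 1 hh, card_dyckFrom_succ 0 hh]
    simp only [Nat.reduceAdd, totalPeakHeight_two, card_dyckFrom_length_zero]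
    split_ifs <;> lia

lemma two_mul_totalPeakHeight_add_three (L : ℕ) (h : ℤ) :
    2 * totalPeakHeight (L + 3) h =
      8 * totalPeakHeight (L + 1) h +
        (h + 1) * ((h + 2) * #(dyckFrom L (h - 1)) - h * #(dyckFrom L (h + 1))) := by
  induction L generalizing h with
  | zero =>
    simp only [zero_add, totalPeakHeight_three, totalPeakHeight_one, card_dyckFrom_length_zero]
    by_cases h_one : h = 1
    · simp [h_one]
    · by_cases h_neg_one : h = -1
      · simp [h_neg_one]
      · simp [h_one, sub_eq_zero, add_eq_zero_iff_eq_neg, h_neg_one]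
  | succ L ih =>
    rcases lt_or_ge h 0 with hneg | hh
    · rcases eq_or_ne h (-1) with rfl | hne
      · simp [totalPeakHeight_of_neg]
      · simp [totalPeakHeight_of_neg, hneg, card_dyckFrom_of_neg, (by lia : h - 1 < 0),
          (by lia : h + 1 < 0)]
    have total_add_four := totalPeakHeight_add_two (L + 2) hh
    have total_add_two := totalPeakHeight_add_two L hh
    have card_add_two : (#(dyckFrom (L + 2) h) : ℤ) =
        #(dyckFrom (L + 1) (h + 1)) + #(dyckFrom (L + 1) (h - 1)) :=
      mod_cast card_dyckFrom_succ (L + 1) hh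
    have card_above : (#(dyckFrom (L + 1) (h + 1)) : ℤ) =
        #(dyckFrom L (h + 1 + 1)) + #(dyckFrom L (h + 1 - 1)) :=
      mod_cast card_dyckFrom_succ L (by lia)
    have mul_card_below := mul_card_dyckFrom_succ_sub_one L h
    have ih_above := ih (h + 1)
    have ih_below := ih (h - 1)
    rw [add_sub_cancel_right] at card_above ih_above
    rw [sub_add_cancel] at ih_below
    linear_combination 2 * total_add_four - 8 * total_add_two + ih_above + ih_below +
      2 * (h + 1) * card_add_two + (h + 1) * (h + 2) * card_above - (h + 1) * mul_card_below

lemma totalPeakHeight_two_mul_succ (n : ℕ) : totalPeakHeight (2 * (n + 1)) 0 = 4 ^ n := by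
  induction n with
  | zero => simp [totalPeakHeight_two]
  | succ n ih =>
    have rec_at_zero : 2 * totalPeakHeight (2 * (n + 1 + 1)) 0 =
        8 * totalPeakHeight (2 * (n + 1)) 0 := by
      simpa [card_dyckFrom_of_neg, mul_add] using
        two_mul_totalPeakHeight_add_three (2 * n + 1) 0
    rw [pow_succ, ← ih]
    linarith

end StartingHeight

open scoped Classical in
/-- For every integer `n ≥ 1`, the sum, over all Dyck paths of
length `2n` and over all peaks of each path, of the heights of the peaks
equals `4^(n-1)`. -/
theorem stmt_5 (n : ℕ) (hn : 1 ≤ n) :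
    (∑ w ∈ Finset.univ.filter (fun w : Fin (2 * n) → Bool => IsDyck w),
      ∑ i ∈ Finset.range (2 * n),
        if IsPeak w i then peakHeight w i else 0) = 4 ^ (n - 1) := by
  obtain ⟨n, rfl⟩ := Nat.exists_eq_add_of_le' hn
  rw [Nat.add_sub_cancel, ← totalPeakHeight_two_mul_succ]
  simp only [totalPeakHeight, peakHeightSum, dyckFrom_zero, zero_add]
end

section
/- For all integers n ≥ 1 and k ≥ 1, the sum over all Dyck bridges B of length 2n whose partial sums all lie in the interval [−2, 2] of k^(c(B)), where c(B) is the number of crossings of the x-axis of B, equals 2·(k+2)^(n−1). (Equivalently, Dyck bridges of length 2n in the strip [−2,2] with each crossing of the x-axis colored in one of k colors are counted by 2(k+2)^(n−1).) -/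
/-- The word `w` followed by the letter `c`. -/
local infixl:67 "∷ʳ" => Fin.snoc (α := fun _ ↦ Bool)

/-- Every partial sum of the word `w` lies in the interval `[-r, r]`. -/
def InStrip {L : ℕ} (r : ℤ) (w : Fin L → Bool) : Prop :=
  ∀ i : ℕ, -r ≤ psum w i ∧ psum w i ≤ r

/-- The number `c(w)` of crossings of the x-axis by the word `w`. -/
noncomputable def crossingCount {L : ℕ} (w : Fin L → Bool) : ℕ :=
  {i : ℕ | IsCrossing w i}.ncard

section Snoc

variable {L : ℕ} (w : Fin L → Bool) (c : Bool)

lemma psum_snoc_of_le {i : ℕ} (hi : i ≤ L) : psum (w ∷ʳ c) i = psum w i := by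
  simp [psum, Fin.sum_univ_castSucc, hi.not_gt]

lemma psum_snoc_of_lt {i : ℕ} (hi : L < i) : psum (w ∷ʳ c) i = psum w L + stepVal c := by
  have h_lt (j : Fin L) : (j : ℕ) < i := j.isLt.trans hi
  simp [psum, Fin.sum_univ_castSucc, hi, h_lt]

lemma psum_of_length_le {i : ℕ} (hi : L ≤ i) : psum w i = psum w L := by
  have h_lt (j : Fin L) : (j : ℕ) < i := j.isLt.trans_le hi
  simp [psum, h_lt]

lemma isBridge_snoc : IsBridge (w ∷ʳ c) ↔ psum w L + stepVal c = 0 := by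
  rw [IsBridge, psum_snoc_of_lt w c L.lt_succ_self]

lemma inStrip_snoc {r : ℤ} :
    InStrip r (w ∷ʳ c) ↔
      InStrip r w ∧ -r ≤ psum w L + stepVal c ∧ psum w L + stepVal c ≤ r := by
  constructor
  · refine fun h ↦ ⟨fun i ↦ ?_, ?_⟩
    · rcases le_total i L with hi | hi
      · simpa only [psum_snoc_of_le w c hi] using h i
      · simpa only [psum_of_length_le w hi, psum_snoc_of_le w c le_rfl] using h L
    · simpa only [psum_snoc_of_lt w c L.lt_succ_self] using h (L + 1)
  · rintro ⟨hw, hc⟩ i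
    rcases le_or_gt i L with hi | hi
    · simpa only [psum_snoc_of_le w c hi] using hw i
    · simpa only [psum_snoc_of_lt w c hi] using hc

lemma InStrip.of_snoc {r : ℤ} {w : Fin L → Bool} {c : Bool} (h : InStrip r (w ∷ʳ c)) :
    InStrip r w :=
  ((inStrip_snoc w c).1 h).1

lemma isCrossing_snoc {i : ℕ} :
    IsCrossing (w ∷ʳ c) i ↔
      IsCrossing w i ∨ i = L ∧ psum w L = 0 ∧ ∃ j : Fin L, (j : ℕ) + 1 = L ∧ w j = c := by
  rcases lt_trichotomy i L with hi | rfl | hi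
  · have h_ne : L + 1 ≠ i := by omega
    simp [IsCrossing, Fin.exists_fin_succ', psum_snoc_of_le w c hi.le, hi, hi.le, hi.ne, hi.ne',
      h_ne]
  · have h_ne (j : Fin i) : (j : ℕ) ≠ i := j.isLt.ne
    simpa [IsCrossing, Fin.exists_fin_succ', psum_snoc_of_le w c le_rfl, h_ne] using
      fun _ j _ _ ↦ j.pos
  · simp only [IsCrossing, hi.ne', false_and, or_false]
    omega

open scoped Classical in
lemma crossingCount_snoc :
    crossingCount (w ∷ʳ c) = crossingCount w +
      if psum w L = 0 ∧ ∃ j : Fin L, (j : ℕ) + 1 = L ∧ w j = c then 1 else 0 := by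
  have h_finite : {i | IsCrossing w i}.Finite :=
    (Set.finite_lt_nat L).subset fun i hi ↦ hi.2.1
  have h_notMem : L ∉ {i | IsCrossing w i} := fun h ↦ h.2.1.false
  simp only [crossingCount, isCrossing_snoc]
  split_ifs with h
  · simpa [h, Set.insert_def, or_comm (b := _ = L)] using
      Set.ncard_insert_of_notMem h_notMem h_finite
  · simp [h]

variable {w}

lemma crossingCount_snoc_of_ne_zero (hw : psum w L ≠ 0) :
    crossingCount (w ∷ʳ c) = crossingCount w := by
  simp [crossingCount_snoc, hw]

lemma crossingCount_snoc_snoc_of_ne_zero (hw : psum w L ≠ 0) (d : Bool) :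
    crossingCount (w ∷ʳ c ∷ʳ d) =
      crossingCount w + if psum w L + stepVal c = 0 ∧ c = d then 1 else 0 := by
  rw [crossingCount_snoc, crossingCount_snoc_of_ne_zero c hw, psum_snoc_of_lt w c L.lt_succ_self]
  simp [Fin.exists_fin_succ', Fin.is_lt, Nat.ne_of_lt]

end Snoc

lemma odd_stepVal (b : Bool) : Odd (stepVal b) := by
  cases b <;> decide

lemma odd_psum_length_iff {L : ℕ} (w : Fin L → Bool) : Odd (psum w L) ↔ Odd L := by
  induction w using Fin.snocInduction with
  | elim0 => simp [psum]
  | snoc w c ih =>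
    rw [psum_snoc_of_lt w c (Nat.lt_succ_self _), Int.odd_add, ih, Nat.odd_add_one,
      ← Int.not_odd_iff_even]
    simp [odd_stepVal]

lemma InStrip.psum_eq_one_or_neg_one {L : ℕ} {w : Fin L → Bool} (hw : InStrip 2 w) (hL : Odd L) :
    psum w L = 1 ∨ psum w L = -1 := by
  obtain ⟨t, ht⟩ := (odd_psum_length_iff w).2 hL
  have := hw L
  omega

section WeightedSums

variable {R : Type*} [CommSemiring R] (k : R) {L : ℕ}

open Finset

lemma sum_filter_snoc {α M : Type*} [Fintype α] [AddCommMonoid M]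
    {P : (Fin (L + 1) → α) → Prop} {Q : (Fin L → α) → Prop}
    [DecidablePred P] [DecidablePred Q]
    (hPQ : ∀ w c, P (Fin.snoc w c) → Q w) (f : (Fin (L + 1) → α) → M) :
    ∑ v with P v, f v = ∑ w with Q w, ∑ c with P (Fin.snoc w c), f (Fin.snoc w c) := by
  rw [sum_filter, ← (Fin.snocEquiv fun _ ↦ α).sum_comp, Fintype.sum_prod_type_right, sum_filter]
  refine sum_congr rfl fun w _ ↦ ?_
  split_ifs with hw
  · rw [sum_filter]
    rfl
  · exact sum_eq_zero fun c _ ↦ if_neg fun h ↦ hw (hPQ w c h)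

open scoped Classical in
lemma InStrip.sum_pow_crossingCount_snoc_snoc {w : Fin L → Bool}
    (hw : InStrip 2 w) (hL : Odd L) :
    ∑ c with InStrip 2 (w ∷ʳ c), ∑ d with InStrip 2 (w ∷ʳ c ∷ʳ d),
      k ^ crossingCount (w ∷ʳ c ∷ʳ d) = (k + 2) * k ^ crossingCount w := by
  have h_end := hw.psum_eq_one_or_neg_one hL
  have h_ne : psum w L ≠ 0 := by omega
  simp only [sum_filter, Fintype.sum_bool, inStrip_snoc, psum_snoc_of_lt w _ L.lt_succ_self,
    crossingCount_snoc_snoc_of_ne_zero _ h_ne]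
  rcases h_end with h | h
  all_goals
    simp [h, hw, stepVal]
    ring

open scoped Classical in
lemma InStrip.sum_pow_crossingCount_snoc_isBridge {w : Fin L → Bool}
    (hw : InStrip 2 w) (hL : Odd L) :
    ∑ c with IsBridge (w ∷ʳ c) ∧ InStrip 2 (w ∷ʳ c), k ^ crossingCount (w ∷ʳ c) =
      k ^ crossingCount w := by
  have h_end := hw.psum_eq_one_or_neg_one hL
  have h_ne : psum w L ≠ 0 := by omega
  simp only [sum_filter, Fintype.sum_bool, isBridge_snoc, inStrip_snoc,
    crossingCount_snoc_of_ne_zero _ h_ne]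
  rcases h_end with h | h <;> simp [h, hw, stepVal]

open scoped Classical in
lemma sum_inStrip_two_pow_crossingCount (m : ℕ) :
    ∑ w : Fin (2 * m + 1) → Bool with InStrip 2 w, k ^ crossingCount w = 2 * (k + 2) ^ m := by
  induction m with
  | zero =>
    have h_strip (w : Fin 1 → Bool) : InStrip 2 w := fun i ↦ by
      cases h : w 0 <;> rcases i.eq_zero_or_pos with hi | hi <;>
        simp [psum, stepVal, h, hi]
    have h_count (w : Fin 1 → Bool) : crossingCount w = 0 := by
      have h_empty : {i | IsCrossing w i} = ∅ :=
        Set.eq_empty_of_forall_notMem fun _ ⟨h_pos, h_lt, _⟩ ↦ by omega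
      rw [crossingCount, h_empty, Set.ncard_empty]
    simp [h_strip, h_count]
  | succ m ih =>
    calc ∑ v : Fin (2 * m + 1 + 1 + 1) → Bool with InStrip 2 v, k ^ crossingCount v
      _ = ∑ w : Fin (2 * m + 1) → Bool with InStrip 2 w, ∑ c with InStrip 2 (w ∷ʳ c),
            ∑ d with InStrip 2 (w ∷ʳ c ∷ʳ d), k ^ crossingCount (w ∷ʳ c ∷ʳ d) := by
        rw [sum_filter_snoc fun _ _ ↦ InStrip.of_snoc,
          sum_filter_snoc fun _ _ ↦ InStrip.of_snoc]
      _ = ∑ w : Fin (2 * m + 1) → Bool with InStrip 2 w, (k + 2) * k ^ crossingCount w :=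
        sum_congr rfl fun w hw ↦ InStrip.sum_pow_crossingCount_snoc_snoc k
          ((mem_filter_univ w).1 hw) (odd_two_mul_add_one m)
      _ = 2 * (k + 2) ^ (m + 1) := by
        rw [← mul_sum, ih]
        ring

end WeightedSums

open scoped Classical in
theorem stmt_9_general {R : Type*} [CommSemiring R] (n : ℕ) (k : R) (hn : 1 ≤ n) :
    (∑ w ∈ Finset.univ.filter
        (fun w : Fin (2 * n) → Bool =>
          IsBridge w ∧ ∀ i : ℕ, -2 ≤ psum w i ∧ psum w i ≤ 2),
      k ^ Nat.card {i : ℕ // IsCrossing w i}) = 2 * (k + 2) ^ (n - 1) := by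
  obtain ⟨m, rfl⟩ := Nat.exists_eq_add_of_le' hn
  calc ∑ v : Fin (2 * m + 1 + 1) → Bool with IsBridge v ∧ InStrip 2 v, k ^ crossingCount v
    _ = ∑ w : Fin (2 * m + 1) → Bool with InStrip 2 w,
          ∑ c with IsBridge (w ∷ʳ c) ∧ InStrip 2 (w ∷ʳ c), k ^ crossingCount (w ∷ʳ c) :=
      sum_filter_snoc (fun _ _ h ↦ h.2.of_snoc) _
    _ = ∑ w : Fin (2 * m + 1) → Bool with InStrip 2 w, k ^ crossingCount w :=
      Finset.sum_congr rfl fun w hw ↦ InStrip.sum_pow_crossingCount_snoc_isBridge k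
        ((Finset.mem_filter_univ w).1 hw) (odd_two_mul_add_one m)
    _ = 2 * (k + 2) ^ m := sum_inStrip_two_pow_crossingCount k m

open scoped Classical in
/-- For all integers `n ≥ 1` and `k ≥ 1`, the sum over all Dyck
bridges `B` of length `2n` whose partial sums all lie in `[-2, 2]` of
`k^(c(B))`, where `c(B)` is the number of crossings of the x-axis of `B`,
equals `2 * (k+2)^(n-1)`. -/
theorem stmt_9 (n k : ℕ) (hn : 1 ≤ n) (hk : 1 ≤ k) :
    (∑ w ∈ Finset.univ.filter
        (fun w : Fin (2 * n) → Bool =>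
          IsBridge w ∧ ∀ i : ℕ, -2 ≤ psum w i ∧ psum w i ≤ 2),
      k ^ Nat.card {i : ℕ // IsCrossing w i}) = 2 * (k + 2) ^ (n - 1) :=
  stmt_9_general n k hn
end
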